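/- A graphon W satisfies d₁(W) + d₂(W) = 3/4 if and only if deg_W(x) = 1/2 for almost every x ∈ [0,1]. -/

import Mathlib

/-!
Writing `a = W x y`, `b = W y z`, `c = W x z`, the two integrands add up to
`a (1 - b) (1 - c) + a c (1 - b) = a (1 - b)`. Integrating out `z` and then `x` (Fubini and
symmetry) gives `d₁ + d₂ = 3 ∫ deg y (1 - deg y) dy = 3/4 - 3 ∫ (deg y - 1/2)² dy`
(`d1_add_d2_eq`), and the last integral vanishes exactly when the degree is `1/2` almost
everywhere.
-/

open MeasureTheory Real

/-- A graphon: a symmetric measurable function `W : ℝ → ℝ → ℝ` taking values in `[0,1]`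
(only its values on `[0,1]²` matter). -/
structure Graphon where
  W : ℝ → ℝ → ℝ
  measurable : Measurable (Function.uncurry W)
  mem_Icc : ∀ x y, W x y ∈ Set.Icc (0 : ℝ) 1
  symm : ∀ x y, W x y = W y x

/-- Density of the empty 3-vertex graph (co-triangle). -/
noncomputable def d0 (G : Graphon) : ℝ :=
  ∫ x in Set.Icc (0 : ℝ) 1, ∫ y in Set.Icc (0 : ℝ) 1, ∫ z in Set.Icc (0 : ℝ) 1,
    (1 - G.W x y) * (1 - G.W y z) * (1 - G.W x z)

/-- Density of the one-edge 3-vertex graph (co-cherry). -/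
noncomputable def d1 (G : Graphon) : ℝ :=
  3 * ∫ x in Set.Icc (0 : ℝ) 1, ∫ y in Set.Icc (0 : ℝ) 1, ∫ z in Set.Icc (0 : ℝ) 1,
    G.W x y * (1 - G.W y z) * (1 - G.W x z)

/-- Density of the two-edge 3-vertex graph (cherry). -/
noncomputable def d2 (G : Graphon) : ℝ :=
  3 * ∫ x in Set.Icc (0 : ℝ) 1, ∫ y in Set.Icc (0 : ℝ) 1, ∫ z in Set.Icc (0 : ℝ) 1,
    G.W x y * G.W x z * (1 - G.W y z)

/-- Triangle density. -/
noncomputable def d3 (G : Graphon) : ℝ :=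
  ∫ x in Set.Icc (0 : ℝ) 1, ∫ y in Set.Icc (0 : ℝ) 1, ∫ z in Set.Icc (0 : ℝ) 1,
    G.W x y * G.W y z * G.W x z

/-- Edge density. -/
noncomputable def dE (G : Graphon) : ℝ :=
  ∫ x in Set.Icc (0 : ℝ) 1, ∫ y in Set.Icc (0 : ℝ) 1, G.W x y

/-- Degree of a vertex `x` in a graphon. -/
noncomputable def deg (G : Graphon) (x : ℝ) : ℝ :=
  ∫ y in Set.Icc (0 : ℝ) 1, G.W x y

noncomputable def hA1 (σ : ℝ) : ℝ :=
  (9 - 48 * σ + 114 * σ ^ 2 - 120 * σ ^ 3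
      + 3 * (1 - 2 * σ) * (4 * σ - 1) ^ 2 * Real.sqrt (5 - 12 * σ)) / (10 - 24 * σ)

noncomputable def hA3 (σ : ℝ) : ℝ :=
  (2 - 18 * σ + 57 * σ ^ 2 - 60 * σ ^ 3) / (5 - 12 * σ)

def hB1 (σ : ℝ) : ℝ := 6 * σ - 18 * σ ^ 2 + 18 * σ ^ 3

def hB3 (σ : ℝ) : ℝ := 1 - 6 * σ + 12 * σ ^ 2 - 6 * σ ^ 3

/-- The objective function of the optimization problem from Proposition 10. -/
def F (α x1 x2 x3 y1 y2 y3 : ℝ) : ℝ :=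
  (x1 ^ 3 * (3 - α - 3 * (3 - α) * y1 - 3 * (α - 1) * y1 ^ 2) + 3 * x1 ^ 2 * y1) +
  (x2 ^ 3 * (3 - α - 3 * (3 - α) * y2 - 3 * (α - 1) * y2 ^ 2) + 3 * x2 ^ 2 * y2) +
  (x3 ^ 3 * (3 - α - 3 * (3 - α) * y3 - 3 * (α - 1) * y3 ^ 2) + 3 * x3 ^ 2 * y3)

local notation "μI" => (volume.restrict (Set.Icc (0 : ℝ) 1) : Measure ℝ)

instance isProbabilityMeasure_unitInterval : IsProbabilityMeasure μI :=
  ⟨by simp⟩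

lemma integrable_of_mem_unit {α : Type*} [MeasurableSpace α] (ν : Measure α) [IsFiniteMeasure ν]
    {f : α → ℝ} (hf : Measurable f) (h : ∀ a, f a ∈ Set.Icc (0 : ℝ) 1) : Integrable f ν :=
  Integrable.of_mem_Icc 0 1 hf.aemeasurable (Filter.Eventually.of_forall h)

lemma iteratedIntegral_eq_integral_prod {f : ℝ × ℝ × ℝ → ℝ} (hf : Measurable f)
    (h : ∀ p, f p ∈ Set.Icc (0 : ℝ) 1) :
    ∫ x, ∫ y, ∫ z, f (x, y, z) ∂μI ∂μI ∂μI = ∫ p, f p ∂(Measure.prod μI (Measure.prod μI μI)) := by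
  rw [integral_prod _ (integrable_of_mem_unit _ hf h)]
  refine integral_congr_ae (Filter.Eventually.of_forall fun x => ?_)
  have hx : Measurable fun q : ℝ × ℝ => f (x, q) := hf.comp measurable_prodMk_left
  exact (integral_prod _ (integrable_of_mem_unit _ hx fun q => h (x, q))).symm

lemma Graphon.measurable_comp (G : Graphon) {α : Type*} [MeasurableSpace α] {u v : α → ℝ}
    (hu : Measurable u) (hv : Measurable v) : Measurable fun a => G.W (u a) (v a) :=
  G.measurable.comp (hu.prodMk hv)

lemma measurable_deg (G : Graphon) : Measurable (deg G) :=
  (G.measurable.stronglyMeasurable.integral_prod_right (ν := μI)).measurable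

lemma integrable_row (G : Graphon) (x : ℝ) : Integrable (fun y => G.W x y) μI :=
  integrable_of_mem_unit _ (G.measurable_comp measurable_const measurable_id) fun y => G.mem_Icc x y

lemma deg_mem (G : Graphon) (x : ℝ) : deg G x ∈ Set.Icc (0 : ℝ) 1 := by
  refine ⟨integral_nonneg fun y => (G.mem_Icc x y).1, ?_⟩
  calc deg G x ≤ ∫ _, (1 : ℝ) ∂μI :=
        integral_mono (integrable_row G x) (integrable_const _) fun y => (G.mem_Icc x y).2
    _ = 1 := by simp

/-- The integrands of `d1` and `d2` sum pointwise to `W x y * (1 - W y z)`, with the dependence on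
`W x z` cancelling. -/
lemma d1_add_d2_eq_iteratedIntegral (G : Graphon) :
    d1 G + d2 G = 3 * ∫ x, ∫ y, ∫ z, G.W x y * (1 - G.W y z) ∂μI ∂μI ∂μI := by
  have one_sub_mem : ∀ x y, 1 - G.W x y ∈ Set.Icc (0 : ℝ) 1 := fun x y =>
    Set.Icc.one_sub_mem (G.mem_Icc x y)
  have hxy : Measurable fun p : ℝ × ℝ × ℝ => G.W p.1 p.2.1 :=
    G.measurable_comp (by fun_prop) (by fun_prop)
  have hyz : Measurable fun p : ℝ × ℝ × ℝ => G.W p.2.1 p.2.2 :=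
    G.measurable_comp (by fun_prop) (by fun_prop)
  have hxz : Measurable fun p : ℝ × ℝ × ℝ => G.W p.1 p.2.2 :=
    G.measurable_comp (by fun_prop) (by fun_prop)
  have m₁ : Measurable fun p : ℝ × ℝ × ℝ =>
      G.W p.1 p.2.1 * (1 - G.W p.2.1 p.2.2) * (1 - G.W p.1 p.2.2) := by fun_prop
  have m₂ : Measurable fun p : ℝ × ℝ × ℝ =>
      G.W p.1 p.2.1 * G.W p.1 p.2.2 * (1 - G.W p.2.1 p.2.2) := by fun_prop
  have m₃ : Measurable fun p : ℝ × ℝ × ℝ =>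
      G.W p.1 p.2.1 * (1 - G.W p.2.1 p.2.2) := by fun_prop
  have b₁ : ∀ p : ℝ × ℝ × ℝ,
      G.W p.1 p.2.1 * (1 - G.W p.2.1 p.2.2) * (1 - G.W p.1 p.2.2) ∈ Set.Icc (0 : ℝ) 1 := fun p =>
    unitInterval.mul_mem (unitInterval.mul_mem (G.mem_Icc _ _) (one_sub_mem _ _)) (one_sub_mem _ _)
  have b₂ : ∀ p : ℝ × ℝ × ℝ,
      G.W p.1 p.2.1 * G.W p.1 p.2.2 * (1 - G.W p.2.1 p.2.2) ∈ Set.Icc (0 : ℝ) 1 := fun p =>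
    unitInterval.mul_mem (unitInterval.mul_mem (G.mem_Icc _ _) (G.mem_Icc _ _)) (one_sub_mem _ _)
  have b₃ : ∀ p : ℝ × ℝ × ℝ,
      G.W p.1 p.2.1 * (1 - G.W p.2.1 p.2.2) ∈ Set.Icc (0 : ℝ) 1 := fun p =>
    unitInterval.mul_mem (G.mem_Icc _ _) (one_sub_mem _ _)
  rw [d1, d2, iteratedIntegral_eq_integral_prod m₁ b₁, iteratedIntegral_eq_integral_prod m₂ b₂,
    iteratedIntegral_eq_integral_prod m₃ b₃, ← mul_add,
    ← integral_add (integrable_of_mem_unit _ m₁ b₁) (integrable_of_mem_unit _ m₂ b₂)]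
  congr 2
  funext p
  ring

/-- For fixed middle vertex `y` the integrals over `z` and `x` separate. -/
lemma iteratedIntegral_eq_integral_deg (G : Graphon) :
    ∫ x, ∫ y, ∫ z, G.W x y * (1 - G.W y z) ∂μI ∂μI ∂μI = ∫ y, deg G y * (1 - deg G y) ∂μI := by
  have inner : ∀ x y, ∫ z, G.W x y * (1 - G.W y z) ∂μI = G.W x y * (1 - deg G y) := fun x y => by
    rw [integral_const_mul, integral_sub (integrable_const _) (integrable_row G y)]
    simp [deg]
  simp_rw [inner]
  have hm : Measurable fun p : ℝ × ℝ => G.W p.1 p.2 * (1 - deg G p.2) :=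
    (G.measurable_comp measurable_fst measurable_snd).mul
      (measurable_const.sub ((measurable_deg G).comp measurable_snd))
  have hb : ∀ p : ℝ × ℝ, G.W p.1 p.2 * (1 - deg G p.2) ∈ Set.Icc (0 : ℝ) 1 := fun p =>
    unitInterval.mul_mem (G.mem_Icc _ _) (Set.Icc.one_sub_mem (deg_mem G _))
  rw [integral_integral_swap (integrable_of_mem_unit _ hm hb)]
  refine integral_congr_ae (Filter.Eventually.of_forall fun y => ?_)
  simp only [integral_mul_const, deg, G.symm _ y]

lemma integrable_sq_deg_sub_half (G : Graphon) :
    Integrable (fun y => (deg G y - 1 / 2) ^ 2) μI :=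
  integrable_of_mem_unit _ (((measurable_deg G).sub_const _).pow_const 2) fun y => by
    obtain ⟨h0, h1⟩ := deg_mem G y
    constructor <;> nlinarith

lemma d1_add_d2_eq (G : Graphon) :
    d1 G + d2 G = 3 / 4 - 3 * ∫ y, (deg G y - 1 / 2) ^ 2 ∂μI := by
  have key : ∀ y, deg G y * (1 - deg G y) = 1 / 4 - (deg G y - 1 / 2) ^ 2 := fun y => by ring
  rw [d1_add_d2_eq_iteratedIntegral, iteratedIntegral_eq_integral_deg]
  simp_rw [key]
  rw [integral_sub (integrable_const _) (integrable_sq_deg_sub_half G)]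
  simp
  ring

theorem boundary_S12_characterization (G : Graphon) :
    d1 G + d2 G = 3 / 4 ↔
      (∀ᵐ x ∂(MeasureTheory.volume.restrict (Set.Icc (0 : ℝ) 1)), deg G x = 1 / 2) := by
  rw [d1_add_d2_eq]
  have h0 := integral_eq_zero_iff_of_nonneg (μ := μI) (fun y => sq_nonneg (deg G y - 1 / 2))
    (integrable_sq_deg_sub_half G)
  have h1 : 3 / 4 - 3 * ∫ y, (deg G y - 1 / 2) ^ 2 ∂μI = 3 / 4 ↔
      ∫ y, (deg G y - 1 / 2) ^ 2 ∂μI = 0 := by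
    constructor <;> intro h <;> linarith
  rw [h1, h0]
  refine Filter.eventually_congr (Filter.Eventually.of_forall fun y => ?_)
  simp [sub_eq_zero]
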